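/- arXiv:1204.2445 — 15 statements merged into one kernel-verified Lean document; each statement's English description precedes it below -/
import Mathlib

section
/- For every fixed positive integer p, a subset A of the real numbers is bounded if and only if A is p-quasi-Cauchy compact, i.e., if and only if every sequence of points in A has a p-quasi-Cauchy subsequence. -/
open Filter Topology

/-- A real sequence `x` is `p`-quasi-Cauchy if `x (n + p) - x n → 0`. -/
def PQuasiCauchy (p : ℕ) (x : ℕ → ℝ) : Prop :=
  Tendsto (fun n => x (n + p) - x n) atTop (𝓝 0)

/-- An unbounded set of reals contains a sequence whose absolute values increase by at least `1`
at each step. -/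
theorem exists_seq_abs_add_one_le_of_not_isBounded {A : Set ℝ} (hA : ¬ Bornology.IsBounded A) :
    ∃ x : ℕ → ℝ, (∀ n, x n ∈ A) ∧ ∀ m n, m < n → |x m| + 1 ≤ |x n| := by
  have h : ∀ r : ℝ, ∃ a ∈ A, r < |a| := by
    intro r
    by_contra! hr
    exact hA (isBounded_iff_forall_norm_le.2 ⟨r, hr⟩)
  choose f hfA hf using h
  let x : ℕ → ℝ := fun n => Nat.rec (f 0) (fun _ a => f (|a| + 1)) n
  have hstep : ∀ n, |x n| + 1 ≤ |x (n + 1)| := fun n => (hf (|x n| + 1)).le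
  have hmono : Monotone fun n => |x n| :=
    monotone_nat_of_le_succ fun n => by linarith [hstep n]
  refine ⟨x, fun n => ?_, fun m n hmn => (hstep m).trans (hmono hmn)⟩
  cases n <;> exact hfA _

/-- For every fixed positive integer `p`, a subset `A` of `ℝ` is bounded
iff every sequence of points in `A` has a `p`-quasi-Cauchy subsequence. -/
theorem bounded_iff_pQuasiCauchy_compact (p : ℕ) (hp : 0 < p) (A : Set ℝ) :
    Bornology.IsBounded A ↔
      ∀ x : ℕ → ℝ, (∀ n, x n ∈ A) →
        ∃ k : ℕ → ℕ, StrictMono k ∧ PQuasiCauchy p (x ∘ k) := by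
  refine ⟨fun hA x hx => ?_, fun h => ?_⟩
  · obtain ⟨a, -, k, hk, hlim⟩ := tendsto_subseq_of_bounded hA hx
    refine ⟨k, hk, ?_⟩
    simpa [PQuasiCauchy] using (hlim.comp (tendsto_add_atTop_nat p)).sub hlim
  · by_contra hA
    obtain ⟨x, hxA, hx⟩ := exists_seq_abs_add_one_le_of_not_isBounded hA
    obtain ⟨k, hk, hlim⟩ := h x hxA
    obtain ⟨n, hn⟩ := (hlim.abs.eventually_lt_const (by simp : |(0 : ℝ)| < 1)).exists
    have hgap := hx (k n) (k (n + p)) (hk (by omega))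
    have htri := abs_sub_abs_le_abs_sub (x (k (n + p))) (x (k n))
    simp only [Function.comp_apply] at hn
    linarith
end

section
/- A subset A of the real numbers is bounded if and only if every sequence of points in A has a quasi-Cauchy subsequence, i.e., a subsequence (y_k) with lim_{k→∞} (y_{k+1} − y_k) = 0. -/
open Filter Topology

/-- A real sequence `y` is quasi-Cauchy if `y (k + 1) - y k → 0`. -/
def QuasiCauchy (y : ℕ → ℝ) : Prop :=
  Tendsto (fun k => y (k + 1) - y k) atTop (𝓝 0)

/-- An unbounded set of reals contains a sequence whose absolute values increase by more than `1`
at each step. -/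
theorem exists_seq_abs_add_one_lt {A : Set ℝ} (hA : ¬ Bornology.IsBounded A) :
    ∃ x : ℕ → ℝ, (∀ n, x n ∈ A) ∧ ∀ n, |x n| + 1 < |x (n + 1)| := by
  have h : ∀ r : ℝ, ∃ a ∈ A, r + 1 < |a| := by
    intro r
    by_contra! hr
    exact hA (isBounded_iff_forall_norm_le.2 ⟨r + 1, hr⟩)
  choose f hfA hf using h
  refine ⟨fun n => Nat.rec (f 0) (fun _ y => f |y|) n, fun n => ?_, fun n => hf _⟩
  cases n <;> exact hfA _

/-- A subset `A` of `ℝ` is bounded iff every sequence of points in `A`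
has a quasi-Cauchy subsequence. -/
theorem bounded_iff_quasiCauchy_compact (A : Set ℝ) :
    Bornology.IsBounded A ↔
      ∀ x : ℕ → ℝ, (∀ n, x n ∈ A) →
        ∃ k : ℕ → ℕ, StrictMono k ∧ QuasiCauchy (x ∘ k) := by
  constructor
  · intro hA x hx
    obtain ⟨a, -, k, hk, hlim⟩ := tendsto_subseq_of_bounded hA hx
    exact ⟨k, hk, by simpa [QuasiCauchy] using (hlim.comp (tendsto_add_atTop_nat 1)).sub hlim⟩
  · intro h
    by_contra hA
    obtain ⟨x, hxA, hx⟩ := exists_seq_abs_add_one_lt hA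
    obtain ⟨k, hk, hlim⟩ := h x hxA
    have hmono : Monotone fun n => |x n| :=
      monotone_nat_of_le_succ fun n => by linarith [hx n]
    obtain ⟨N, hN⟩ := Metric.tendsto_atTop.1 hlim 1 one_pos
    have hsmall : |x (k (N + 1)) - x (k N)| < 1 := by simpa using hN N le_rfl
    have hgrow : |x (k N + 1)| ≤ |x (k (N + 1))| := hmono (hk N.lt_succ_self)
    linarith [hx (k N), abs_sub_abs_le_abs_sub (x (k (N + 1))) (x (k N))]
end

section
/- Let p be a positive integer and E a subset of ℝ. If a function f : E → ℝ is p-quasi-Cauchy continuous on E, then f is quasi-Cauchy continuous on E, i.e., f maps quasi-Cauchy sequences of points in E to quasi-Cauchy sequences. -/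
open Filter Topology

/-- A function `f` is `p`-quasi-Cauchy continuous on `E` if it maps `p`-quasi-Cauchy
sequences of points in `E` to `p`-quasi-Cauchy sequences. -/
def PQuasiCauchyContinuousOn (p : ℕ) (f : ℝ → ℝ) (E : Set ℝ) : Prop :=
  ∀ x : ℕ → ℝ, (∀ n, x n ∈ E) → PQuasiCauchy p x → PQuasiCauchy p (fun n => f (x n))

/-- If `f` is `p`-quasi-Cauchy continuous on `E` for a positive integer `p`,
then `f` is quasi-Cauchy continuous (i.e. `1`-quasi-Cauchy continuous) on `E`. -/
theorem pQuasiCauchyContinuous_implies_quasiCauchyContinuous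
    (p : ℕ) (hp : 0 < p) (E : Set ℝ) (f : ℝ → ℝ)
    (hf : PQuasiCauchyContinuousOn p f E) :
    PQuasiCauchyContinuousOn 1 f E := by
  intro x hxE hx
  -- Repeating each term `p` times turns a quasi-Cauchy sequence into a `p`-quasi-Cauchy one.
  have hy : PQuasiCauchy p (fun n => x (n / p)) := by
    simpa only [PQuasiCauchy, Function.comp_def, Nat.add_div_right _ hp] using
      hx.comp (Nat.tendsto_div_const_atTop hp.ne')
  have hfy := (hf _ (fun n => hxE (n / p)) hy).comp (tendsto_id.atTop_mul_const' hp)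
  simpa only [PQuasiCauchy, Function.comp_def, id, Nat.add_div_right _ hp,
    Nat.mul_div_cancel _ hp] using hfy
end

section
/- Let p be a positive integer and E a subset of ℝ. If a function f : E → ℝ is p-quasi-Cauchy continuous on E, then f is continuous on E in the ordinary sense. -/
open Filter Topology

/-- If `f` is `p`-quasi-Cauchy continuous on `E` for a positive integer `p`,
then `f` is continuous on `E` in the ordinary sense. -/
theorem pQuasiCauchyContinuous_implies_continuousOn
    (p : ℕ) (hp : 0 < p) (E : Set ℝ) (f : ℝ → ℝ)
    (hf : PQuasiCauchyContinuousOn p f E) :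
    ContinuousOn f E := by
  rw [continuousOn_iff_continuous_domRestrict, continuous_iff_seqContinuous]
  intro u a hu
  -- Interleave blocks of `p` copies of `a` with blocks of `p` copies of `u k`.
  let x : ℕ → E := fun n => if Even (n / p) then a else u (n / p / 2)
  have hdiv : Tendsto (fun n : ℕ => n / p / 2) atTop atTop :=
    (Nat.tendsto_div_const_atTop two_ne_zero).comp (Nat.tendsto_div_const_atTop hp.ne')
  have hx : Tendsto x atTop (𝓝 a) :=
    (tendsto_const_nhds.mono_left inf_le_left).if ((hu.comp hdiv).mono_left inf_le_left)
  have hx_real : Tendsto (fun n => (x n : ℝ)) atTop (𝓝 (a : ℝ)) :=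
    (continuous_subtype_val.tendsto a).comp hx
  have hquasi : PQuasiCauchy p (fun n => (x n : ℝ)) := by
    simpa [PQuasiCauchy] using (hx_real.comp (tendsto_add_atTop_nat p)).sub hx_real
  have hindex : Tendsto (fun k : ℕ => 2 * k * p) atTop atTop :=
    tendsto_atTop_mono (fun k => show k ≤ 2 * k * p by nlinarith) tendsto_id
  have hdiff := (hf _ (fun n => (x n).2) hquasi).comp hindex
  have hx_even (k : ℕ) : x (2 * k * p) = a := by
    simp [x, Nat.mul_div_cancel _ hp]
  have hx_odd (k : ℕ) : x (2 * k * p + p) = u k := by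
    have hquot : (2 * k * p + p) / p = 2 * k + 1 := by
      rw [← Nat.succ_mul, Nat.mul_div_cancel _ hp]
    have hhalf : (2 * k + 1) / 2 = k := by omega
    simp [x, hquot, hhalf]
  simp only [Function.comp_def, hx_even, hx_odd] at hdiff
  exact tendsto_sub_nhds_zero_iff.mp hdiff
end

section
/- Let p be a positive integer. If f : E → ℝ is p-quasi-Cauchy continuous on a p-quasi-Cauchy compact subset E of ℝ, then the image f(E) is a p-quasi-Cauchy compact subset of ℝ. -/
open Filter Topology

/-- A subset `E` of `ℝ` is `p`-quasi-Cauchy compact if every sequence of points in `E`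
has a `p`-quasi-Cauchy subsequence. -/
def PQuasiCauchyCompact (p : ℕ) (E : Set ℝ) : Prop :=
  ∀ x : ℕ → ℝ, (∀ n, x n ∈ E) → ∃ k : ℕ → ℕ, StrictMono k ∧ PQuasiCauchy p (x ∘ k)

/-- The `p`-quasi-Cauchy continuous image of a `p`-quasi-Cauchy compact
subset of `ℝ` is `p`-quasi-Cauchy compact. -/
theorem pQuasiCauchyContinuous_image_pQuasiCauchyCompact
    (p : ℕ) (hp : 0 < p) (E : Set ℝ) (f : ℝ → ℝ)
    (hE : PQuasiCauchyCompact p E) (hf : PQuasiCauchyContinuousOn p f E) :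
    PQuasiCauchyCompact p (f '' E) := by
  intro y hy
  choose x hxE hxy using hy
  obtain ⟨k, hk, hxk⟩ := hE x hxE
  refine ⟨k, hk, ?_⟩
  simpa only [Function.comp_def, hxy] using hf (x ∘ k) (fun n => hxE (k n)) hxk
end

section
/- Let p be a positive integer. If f : E → ℝ is p-quasi-Cauchy continuous on a compact subset E of ℝ, then the image f(E) is a compact subset of ℝ. -/
open Filter Topology

/-- A `p`-quasi-Cauchy continuous function is continuous. -/
theorem PQuasiCauchyContinuousOn.continuousOn {p : ℕ} (hp : 0 < p) {f : ℝ → ℝ} {E : Set ℝ}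
    (hf : PQuasiCauchyContinuousOn p f E) : ContinuousOn f E := by
  rw [continuousOn_iff_continuous_domRestrict]
  refine SeqContinuous.continuous fun u a hu => ?_
  have hu' : Tendsto (fun n => (u n : ℝ)) atTop (𝓝 (a : ℝ)) :=
    (continuous_subtype_val.tendsto a).comp hu
  -- Blocks of length `p` alternate between terms of `u` and the limit `a`.
  let x : ℕ → ℝ := fun n => if Even (n / p) then (u (n / (2 * p)) : ℝ) else a
  have hxE : ∀ n, x n ∈ E := fun n => by
    dsimp only [x]
    split_ifs
    exacts [(u _).2, a.2]
  have hx : Tendsto x atTop (𝓝 (a : ℝ)) :=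
    Tendsto.if' (hu'.comp (Nat.tendsto_div_const_atTop (by positivity))) tendsto_const_nhds
  have hxp : PQuasiCauchy p x := by
    simpa [PQuasiCauchy] using (hx.comp (tendsto_add_atTop_nat p)).sub hx
  have hsub : Tendsto (fun j : ℕ => j * (2 * p)) atTop atTop :=
    tendsto_id.atTop_mul_const' (by positivity)
  have hlim := (hf x hxE hxp).comp hsub
  have hu_block : ∀ j, x (j * (2 * p)) = u j := fun j => by
    have hdiv : j * (2 * p) / p = 2 * j := by
      rw [show j * (2 * p) = 2 * j * p by ring, Nat.mul_div_cancel _ hp]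
    simp only [x, hdiv, even_two_mul, if_true, Nat.mul_div_cancel j (show 0 < 2 * p by positivity)]
  have ha_block : ∀ j, x (j * (2 * p) + p) = a := fun j => by
    have hdiv : (j * (2 * p) + p) / p = 2 * j + 1 := by
      rw [show j * (2 * p) + p = (2 * j + 1) * p by ring, Nat.mul_div_cancel _ hp]
    simp [x, hdiv]
  simp only [Function.comp_def, hu_block, ha_block] at hlim
  simpa [Function.comp_def] using hlim.const_sub (f a)

/-- The `p`-quasi-Cauchy continuous image of a compact subset of `ℝ`
is compact. -/
theorem pQuasiCauchyContinuous_image_compact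
    (p : ℕ) (hp : 0 < p) (E : Set ℝ) (f : ℝ → ℝ)
    (hE : IsCompact E) (hf : PQuasiCauchyContinuousOn p f E) :
    IsCompact (f '' E) :=
  hE.image_of_continuousOn (hf.continuousOn hp)
end

section
/- If f : E → ℝ is uniformly continuous on a subset E of ℝ, then f is p-quasi-Cauchy continuous on E for every positive integer p. -/
open Filter Topology

/-- If `f` is uniformly continuous on a subset `E` of `ℝ`, then `f` is
`p`-quasi-Cauchy continuous on `E` for every positive integer `p`. -/
theorem uniformContinuousOn_implies_pQuasiCauchyContinuous
    (E : Set ℝ) (f : ℝ → ℝ) (hf : UniformContinuousOn f E) :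
    ∀ p : ℕ, 0 < p → PQuasiCauchyContinuousOn p f E := by
  intro p _ x hx h
  unfold PQuasiCauchy at h ⊢
  rw [Metric.tendsto_atTop] at h ⊢
  rw [Metric.uniformContinuousOn_iff] at hf
  intro ε hε
  obtain ⟨δ, hδ, hfδ⟩ := hf ε hε
  obtain ⟨N, hN⟩ := h δ hδ
  refine ⟨N, fun n hn => ?_⟩
  have hclose := hN n hn
  rw [dist_zero_right, ← dist_eq_norm] at hclose ⊢
  exact hfδ _ (hx _) _ (hx _) hclose
end

section
/- If f : E → ℝ is slowly oscillating continuous on an interval E of ℝ, then f is p-quasi-Cauchy continuous on E for every positive integer p. -/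
open Filter Topology

/-- A real sequence `x` is slowly oscillating if for every `ε > 0` there exist `δ > 0`
and a positive integer `N` such that `|x m - x n| < ε` whenever `N ≤ n`, `n ≤ m`, and
`m ≤ (1 + δ) * n`. -/
def SlowlyOscillating (x : ℕ → ℝ) : Prop :=
  ∀ ε : ℝ, 0 < ε → ∃ δ : ℝ, 0 < δ ∧ ∃ N : ℕ, 0 < N ∧
    ∀ n m : ℕ, N ≤ n → n ≤ m → (m : ℝ) ≤ (1 + δ) * n → |x m - x n| < ε

/-- A function `f` is slowly oscillating continuous on `E` if it maps slowly oscillating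
sequences of points in `E` to slowly oscillating sequences. -/
def SlowlyOscillatingContinuousOn (f : ℝ → ℝ) (E : Set ℝ) : Prop :=
  ∀ x : ℕ → ℝ, (∀ n, x n ∈ E) → SlowlyOscillating x →
    SlowlyOscillating (fun n => f (x n))

theorem slowlyOscillating_const (c : ℝ) : SlowlyOscillating fun _ => c := fun ε hε =>
  ⟨1, one_pos, 1, one_pos, fun _ _ _ _ _ => by simpa using hε⟩

theorem SlowlyOscillating.neg {x : ℕ → ℝ} (hx : SlowlyOscillating x) :
    SlowlyOscillating fun n => -x n := by
  intro ε hε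
  obtain ⟨δ, hδ, N, hN, h⟩ := hx ε hε
  refine ⟨δ, hδ, N, hN, fun n m hn hnm hm => ?_⟩
  rw [neg_sub_neg, abs_sub_comm]
  exact h n m hn hnm hm

/-- Slow oscillation is stable under perturbation by a null sequence. -/
theorem SlowlyOscillating.of_tendsto_sub {x y : ℕ → ℝ} (hx : SlowlyOscillating x)
    (hxy : Tendsto (fun n => y n - x n) atTop (𝓝 0)) : SlowlyOscillating y := by
  intro ε hε
  obtain ⟨δ, hδ, N, hN, h⟩ := hx (ε / 3) (by positivity)
  obtain ⟨M, hM⟩ := Metric.tendsto_atTop.1 hxy (ε / 3) (by positivity)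
  refine ⟨δ, hδ, max N M, by positivity, fun n m hn hnm hm => ?_⟩
  have h₁ := h n m (le_trans (le_max_left _ _) hn) hnm hm
  have h₂ := hM n (le_trans (le_max_right _ _) hn)
  have h₃ := hM m (le_trans (le_trans (le_max_right _ _) hn) hnm)
  rw [Real.dist_0_eq_abs, abs_lt] at h₂ h₃
  rw [abs_lt] at h₁ ⊢
  constructor <;> linarith

theorem SlowlyOscillating.tendsto_succ_sub {x : ℕ → ℝ} (hx : SlowlyOscillating x) :
    Tendsto (fun n => x (n + 1) - x n) atTop (𝓝 0) := by
  rw [Metric.tendsto_atTop]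
  intro ε hε
  obtain ⟨δ, hδ, N, -, h⟩ := hx ε hε
  obtain ⟨K, hK⟩ := exists_nat_gt (1 / δ)
  refine ⟨max N K, fun n hn => ?_⟩
  rw [Real.dist_0_eq_abs]
  refine h n (n + 1) (le_trans (le_max_left _ _) hn) n.le_succ ?_
  have hKn : (K : ℝ) ≤ n := by exact_mod_cast le_trans (le_max_right _ _) hn
  have : 1 < n * δ := (div_lt_iff₀ hδ).1 (hK.trans_le hKn)
  push_cast
  linarith

theorem SlowlyOscillating.comp_half {x : ℕ → ℝ} (hx : SlowlyOscillating x) :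
    SlowlyOscillating fun n => x (n / 2) := by
  intro ε hε
  obtain ⟨δ, hδ, N, -, h⟩ := hx ε hε
  obtain ⟨K, hK⟩ := exists_nat_gt ((1 + δ / 2) / δ)
  refine ⟨δ / 2, by positivity, 2 * max N K + 2, by positivity, fun n m hn hnm hm => ?_⟩
  have hq : max N K ≤ n / 2 := by omega
  refine h (n / 2) (m / 2) (le_trans (le_max_left _ _) hq) (by omega) ?_
  have hKq : (K : ℝ) ≤ (n / 2 : ℕ) := by exact_mod_cast le_trans (le_max_right _ _) hq
  have h₁ : 1 + δ / 2 < (n / 2 : ℕ) * δ := (div_lt_iff₀ hδ).1 (hK.trans_le hKq)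
  have h₂ : (2 : ℝ) * (m / 2 : ℕ) ≤ m := by exact_mod_cast (by omega : 2 * (m / 2) ≤ m)
  have h₃ : (n : ℝ) ≤ 2 * (n / 2 : ℕ) + 1 := by
    exact_mod_cast (by omega : n ≤ 2 * (n / 2) + 1)
  have h₄ := mul_le_mul_of_nonneg_left h₃ (by positivity : 0 ≤ 1 + δ / 2)
  linarith

theorem slowlyOscillating_log_succ (c : ℝ) :
    SlowlyOscillating fun n => c + Real.log (n + 1) := by
  intro ε hε
  refine ⟨ε / 2, by positivity, 1, one_pos, fun n m _ hnm hm => ?_⟩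
  have hnm' : (n : ℝ) ≤ m := by exact_mod_cast hnm
  have hn : (0 : ℝ) < n + 1 := by positivity
  have hm₀ : (0 : ℝ) < m + 1 := by positivity
  have h₀ : Real.log (n + 1) ≤ Real.log (m + 1) := Real.log_le_log hn (by linarith)
  have h₁ := Real.log_le_sub_one_of_pos (div_pos hm₀ hn)
  rw [Real.log_div hm₀.ne' hn.ne'] at h₁
  have h₂ : ((m : ℝ) + 1) / (n + 1) ≤ 1 + ε / 2 := by
    rw [div_le_iff₀ hn]
    linarith
  rw [abs_lt]
  constructor <;> linarith

/-- Interleaving `x` and `y` shows that `f` maps sequences in `E` at vanishing distance to sequences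
at vanishing distance, provided one of them is slowly oscillating. -/
theorem SlowlyOscillatingContinuousOn.tendsto_sub {f : ℝ → ℝ} {E : Set ℝ}
    (hf : SlowlyOscillatingContinuousOn f E) {x y : ℕ → ℝ} (hxE : ∀ n, x n ∈ E)
    (hyE : ∀ n, y n ∈ E) (hx : SlowlyOscillating x)
    (hxy : Tendsto (fun n => y n - x n) atTop (𝓝 0)) :
    Tendsto (fun n => f (y n) - f (x n)) atTop (𝓝 0) := by
  set z : ℕ → ℝ := fun n => if n % 2 = 0 then x (n / 2) else y (n / 2) with hz
  have hzE : ∀ n, z n ∈ E := fun n => by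
    simp only [hz]
    split_ifs
    exacts [hxE _, hyE _]
  have hhalf : Tendsto (fun n : ℕ => n / 2) atTop atTop :=
    tendsto_atTop.2 fun b => eventually_atTop.2 ⟨2 * b, fun n hn => by omega⟩
  have hzx : Tendsto (fun n => z n - x (n / 2)) atTop (𝓝 0) := by
    refine squeeze_zero_norm (fun n => ?_) (tendsto_zero_iff_norm_tendsto_zero.1 (hxy.comp hhalf))
    simp only [hz, Function.comp_apply]
    split_ifs <;> simp
  have h := (hf z hzE (hx.comp_half.of_tendsto_sub hzx)).tendsto_succ_sub
  have hdouble : Tendsto (fun n : ℕ => 2 * n) atTop atTop :=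
    tendsto_atTop.2 fun b => eventually_atTop.2 ⟨b, fun n hn => by omega⟩
  refine (h.comp hdouble).congr fun n => ?_
  have h₁ : z (2 * n) = x n := by simp [hz]
  have h₂ : z (2 * n + 1) = y n := by
    have e₁ : (2 * n + 1) % 2 = 1 := by omega
    have e₂ : (2 * n + 1) / 2 = n := by omega
    simp [hz, e₁, e₂]
  simp only [Function.comp_apply, h₁, h₂]

theorem SlowlyOscillatingContinuousOn.tendsto_sub_comp {f : ℝ → ℝ} {E : Set ℝ}
    (hf : SlowlyOscillatingContinuousOn f E) {x a : ℕ → ℝ} {φ : ℕ → ℕ} (hxE : ∀ n, x n ∈ E)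
    (haE : ∀ n, a n ∈ E) (hx : SlowlyOscillating x) (hφ : Tendsto φ atTop atTop)
    (hxa : Tendsto (fun k => a k - x (φ k)) atTop (𝓝 0)) :
    Tendsto (fun k => f (a k) - f (x (φ k))) atTop (𝓝 0) := by
  refine tendsto_of_subseq_tendsto fun ns hns => ?_
  obtain ⟨ms, hms, hmono⟩ := strictMono_subseq_of_tendsto_atTop (hφ.comp hns)
  refine ⟨ms, ?_⟩
  set ψ : ℕ → ℕ := (φ ∘ ns) ∘ ms with hψ
  set y : ℕ → ℝ := Function.extend ψ (fun k => a (ns (ms k))) x with hy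
  have hyψ : ∀ k, y (ψ k) = a (ns (ms k)) := fun k => hmono.injective.extend_apply _ _ k
  have hyx : ∀ n, (¬∃ k, ψ k = n) → y n = x n := fun n hn => Function.extend_apply' _ _ n hn
  have hyE : ∀ n, y n ∈ E := fun n => by
    by_cases hn : ∃ k, ψ k = n
    · obtain ⟨k, rfl⟩ := hn
      exact hyψ k ▸ haE _
    · exact hyx n hn ▸ hxE n
  have hlim : Tendsto (fun n => y n - x n) atTop (𝓝 0) := by
    rw [Metric.tendsto_atTop]
    intro ε hε
    obtain ⟨K, hK⟩ := Metric.tendsto_atTop.1 (hxa.comp (hns.comp hms.tendsto_atTop)) ε hε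
    refine ⟨ψ K, fun n hn => ?_⟩
    by_cases hn' : ∃ k, ψ k = n
    · obtain ⟨k, rfl⟩ := hn'
      rw [hyψ]
      exact hK k (hmono.le_iff_le.1 hn)
    · simpa [hyx n hn'] using hε
  refine ((hf.tendsto_sub hxE hyE hx hlim).comp hmono.tendsto_atTop).congr fun k => ?_
  have := hyψ k
  simp only [Function.comp_apply, hψ] at this ⊢
  rw [this]

theorem SlowlyOscillatingContinuousOn.tendsto_sub_of_tendsto_nhds {f : ℝ → ℝ} {E : Set ℝ}
    (hf : SlowlyOscillatingContinuousOn f E) {a b : ℕ → ℝ} (haE : ∀ n, a n ∈ E)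
    (hbE : ∀ n, b n ∈ E) (hab : Tendsto (fun n => b n - a n) atTop (𝓝 0)) {l : ℝ}
    (ha : Tendsto a atTop (𝓝 l)) : Tendsto (fun n => f (b n) - f (a n)) atTop (𝓝 0) :=
  hf.tendsto_sub haE hbE
    ((slowlyOscillating_const l).of_tendsto_sub (by simpa using ha.sub_const l)) hab

theorem SlowlyOscillatingContinuousOn.tendsto_sub_of_tendsto_atTop {f : ℝ → ℝ} {E : Set ℝ}
    (hf : SlowlyOscillatingContinuousOn f E) (hE : Convex ℝ E) {a b : ℕ → ℝ} (haE : ∀ n, a n ∈ E)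
    (hbE : ∀ n, b n ∈ E) (hab : Tendsto (fun n => b n - a n) atTop (𝓝 0))
    (ha : Tendsto a atTop atTop) : Tendsto (fun n => f (b n) - f (a n)) atTop (𝓝 0) := by
  set x : ℕ → ℝ := fun n => a 0 + Real.log (n + 1) with hx
  have hxE : ∀ n, x n ∈ E := fun n => by
    obtain ⟨k, hk⟩ := (ha.eventually_ge_atTop (x n)).exists
    refine hE.ordConnected.out (haE 0) (haE k) ⟨?_, hk⟩
    have : 0 ≤ Real.log ((n : ℝ) + 1) := Real.log_nonneg (by simp)
    simp only [hx]
    linarith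
  set u : ℕ → ℝ := fun k => Real.exp (a k - a 0) with hu
  have hu_top : Tendsto u atTop atTop :=
    Real.tendsto_exp_atTop.comp (tendsto_atTop_add_const_right _ (-a 0) ha)
  have hφ : Tendsto (fun k => ⌊u k⌋₊) atTop atTop := tendsto_nat_floor_atTop.comp hu_top
  have hxa : Tendsto (fun k => a k - x ⌊u k⌋₊) atTop (𝓝 0) := by
    refine squeeze_zero_norm (fun k => ?_) hu_top.inv_tendsto_atTop
    have hpos : 0 < u k := Real.exp_pos _
    have hlog : Real.log (u k) = a k - a 0 := Real.log_exp _
    have h₁ : Real.log (u k) ≤ Real.log (⌊u k⌋₊ + 1) :=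
      Real.log_le_log hpos (Nat.lt_floor_add_one _).le
    have hfl : (0 : ℝ) < ⌊u k⌋₊ + 1 := by positivity
    have h₂ := Real.log_le_sub_one_of_pos (div_pos hfl hpos)
    rw [Real.log_div hfl.ne' hpos.ne'] at h₂
    have h₃ : ((⌊u k⌋₊ : ℝ) + 1) / u k ≤ 1 + (u k)⁻¹ := by
      rw [div_le_iff₀ hpos, add_mul, inv_mul_cancel₀ hpos.ne', one_mul]
      linarith [Nat.floor_le hpos.le]
    rw [Real.norm_eq_abs, abs_le]
    simp only [hx, Pi.inv_apply]
    constructor <;> linarith [inv_pos.2 hpos]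
  have hxb : Tendsto (fun k => b k - x ⌊u k⌋₊) atTop (𝓝 0) := by
    simpa using hab.add hxa
  have hxs := slowlyOscillating_log_succ (a 0)
  simpa using (hf.tendsto_sub_comp hxE hbE hxs hφ hxb).sub (hf.tendsto_sub_comp hxE haE hxs hφ hxa)

theorem SlowlyOscillatingContinuousOn.comp_neg {f : ℝ → ℝ} {E : Set ℝ}
    (hf : SlowlyOscillatingContinuousOn f E) :
    SlowlyOscillatingContinuousOn (fun t => f (-t)) {t | -t ∈ E} :=
  fun x hxE hx => hf (fun n => -x n) hxE hx.neg

/-- On an interval, `f` maps any two sequences at vanishing distance to sequences at vanishing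
distance; equivalently, `f` is uniformly continuous there. -/
theorem SlowlyOscillatingContinuousOn.tendsto_sub_of_convex {f : ℝ → ℝ} {E : Set ℝ}
    (hf : SlowlyOscillatingContinuousOn f E) (hE : Convex ℝ E) {a b : ℕ → ℝ} (haE : ∀ n, a n ∈ E)
    (hbE : ∀ n, b n ∈ E) (hab : Tendsto (fun n => b n - a n) atTop (𝓝 0)) :
    Tendsto (fun n => f (b n) - f (a n)) atTop (𝓝 0) := by
  refine tendsto_of_subseq_tendsto fun ns hns => ?_
  obtain ⟨l, ms, hms, hl⟩ := CompactSpace.tendsto_subseq fun k => (a (ns k) : EReal)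
  refine ⟨ms, ?_⟩
  have hab' : Tendsto (fun k => b (ns (ms k)) - a (ns (ms k))) atTop (𝓝 0) :=
    hab.comp (hns.comp hms.tendsto_atTop)
  induction l with
  | bot =>
    have ha : Tendsto (fun k => a (ns (ms k))) atTop atBot := EReal.tendsto_coe_nhds_bot_iff.1 hl
    have hab'' : Tendsto (fun k => -b (ns (ms k)) - -a (ns (ms k))) atTop (𝓝 0) := by
      simpa [neg_add_eq_sub] using hab'.neg
    simpa using hf.comp_neg.tendsto_sub_of_tendsto_atTop
      (a := fun k => -a (ns (ms k))) (b := fun k => -b (ns (ms k))) hE.neg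
      (fun k => by simpa using haE _) (fun k => by simpa using hbE _) hab''
      (tendsto_neg_atBot_atTop.comp ha)
  | coe r =>
    exact hf.tendsto_sub_of_tendsto_nhds (fun k => haE _) (fun k => hbE _) hab'
      (EReal.tendsto_coe.1 hl)
  | top =>
    exact hf.tendsto_sub_of_tendsto_atTop hE (fun k => haE _) (fun k => hbE _) hab'
      (EReal.tendsto_coe_nhds_top_iff.1 hl)

/-- If `f` is slowly oscillating continuous on an interval `E` of `ℝ`
(a nonempty convex subset), then `f` is `p`-quasi-Cauchy continuous on `E` for every
positive integer `p`. -/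
theorem slowlyOscillatingContinuous_implies_pQuasiCauchyContinuous
    (E : Set ℝ) (hne : E.Nonempty) (hconv : Convex ℝ E) (f : ℝ → ℝ)
    (hf : SlowlyOscillatingContinuousOn f E) :
    ∀ p : ℕ, 0 < p → PQuasiCauchyContinuousOn p f E :=
  fun _ _ _ hxE hx => hf.tendsto_sub_of_convex hconv hxE (fun _ => hxE _) hx
end

section
/- Let p be a positive integer. If a function f : E → ℝ is p-quasi-Cauchy continuous on a p-quasi-Cauchy compact subset E of ℝ, then f is uniformly continuous on E. -/
open Filter Topology

/-- A sequence whose terms are pairwise `ε`-separated has no `p`-quasi-Cauchy subsequence,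
so a `p`-quasi-Cauchy compact set is totally bounded. -/
theorem PQuasiCauchyCompact.totallyBounded {p : ℕ} (hp : 0 < p) {E : Set ℝ}
    (hE : PQuasiCauchyCompact p E) : TotallyBounded E := by
  rw [Metric.totallyBounded_iff]
  by_contra! h
  obtain ⟨ε, hε, h⟩ := h
  obtain ⟨x, hxE, hx⟩ := exists_seq_of_forall_finset_exists (· ∈ E)
    (fun a b => ε ≤ dist b a) fun s _ => by
      obtain ⟨y, hyE, hy⟩ := Set.not_subset.1 (h s s.finite_toSet)
      exact ⟨y, hyE, by simpa using hy⟩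
  obtain ⟨k, hk, hq⟩ := hE x hxE
  obtain ⟨N, hN⟩ := Metric.tendsto_atTop.1 hq ε hε
  have hlt : dist (x (k (N + p))) (x (k N)) < ε := by
    simpa [Real.dist_eq] using hN N le_rfl
  exact hlt.not_ge (hx _ _ (hk (Nat.lt_add_of_pos_right hp)))

/-- A convergent sequence is `p`-quasi-Cauchy. -/
theorem Filter.Tendsto.pQuasiCauchy {x : ℕ → ℝ} {l : ℝ} (hx : Tendsto x atTop (𝓝 l)) (p : ℕ) :
    PQuasiCauchy p x := by
  simpa [PQuasiCauchy] using (hx.comp (tendsto_add_atTop_nat p)).sub hx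

/-- A `p`-quasi-Cauchy continuous function identifies, in the limit, the values along two
sequences with a common limit: interleave them in blocks of length `p`. -/
theorem PQuasiCauchyContinuousOn.tendsto_sub {p : ℕ} (hp : 0 < p) {f : ℝ → ℝ} {E : Set ℝ}
    (hf : PQuasiCauchyContinuousOn p f E) {a b : ℕ → ℝ} {l : ℝ} (haE : ∀ n, a n ∈ E)
    (hbE : ∀ n, b n ∈ E) (ha : Tendsto a atTop (𝓝 l)) (hb : Tendsto b atTop (𝓝 l)) :
    Tendsto (fun n => f (b n) - f (a n)) atTop (𝓝 0) := by
  have hpp : 0 < 2 * p := by positivity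
  let z : ℕ → ℝ := fun n => if n % (2 * p) < p then a (n / (2 * p)) else b (n / (2 * p))
  have hdiv : Tendsto (fun n => n / (2 * p)) atTop atTop := Nat.tendsto_div_const_atTop hpp.ne'
  have hz : Tendsto z atTop (𝓝 l) := (ha.comp hdiv).if' (hb.comp hdiv)
  have hzE : ∀ n, z n ∈ E := fun n => by
    by_cases h : n % (2 * p) < p <;> simp [z, h, haE, hbE]
  have hmul : Tendsto (fun n => 2 * p * n) atTop atTop := tendsto_id.const_mul_atTop' hpp
  refine ((hf z hzE (hz.pQuasiCauchy p)).comp hmul).congr fun n => ?_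
  have hza : z (2 * p * n) = a n := by simp [z, hp, hp.ne']
  have hzb : z (2 * p * n + p) = b n := by
    have hmod : (2 * p * n + p) % (2 * p) = p := by
      rw [Nat.mul_add_mod, Nat.mod_eq_of_lt (by omega)]
    have hquot : (2 * p * n + p) / (2 * p) = n := by
      rw [Nat.mul_add_div hpp, Nat.div_eq_of_lt (by omega), add_zero]
    simp [z, hmod, hquot]
  simp only [Function.comp_apply, hza, hzb]

/-- If `f` is `p`-quasi-Cauchy continuous on a `p`-quasi-Cauchy compact
subset `E` of `ℝ`, then `f` is uniformly continuous on `E`. -/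
theorem pQuasiCauchyContinuous_on_pQuasiCauchyCompact_uniformContinuous
    (p : ℕ) (hp : 0 < p) (E : Set ℝ) (f : ℝ → ℝ)
    (hE : PQuasiCauchyCompact p E) (hf : PQuasiCauchyContinuousOn p f E) :
    UniformContinuousOn f E := by
  rw [Metric.uniformContinuousOn_iff]
  by_contra! h
  obtain ⟨ε, hε, h⟩ := h
  choose a haE b hbE hab hfab using fun n : ℕ => h (1 / ((n : ℝ) + 1)) Nat.one_div_pos_of_nat
  obtain ⟨l, -, k, hk, hak⟩ := tendsto_subseq_of_bounded (hE.totallyBounded hp).isBounded haE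
  have hdist : Tendsto (fun n => dist (a n) (b n)) atTop (𝓝 0) :=
    squeeze_zero (fun _ => dist_nonneg) (fun n => (hab n).le)
      tendsto_one_div_add_atTop_nhds_zero_nat
  have hbk : Tendsto (b ∘ k) atTop (𝓝 l) :=
    hak.congr_dist (hdist.comp hk.tendsto_atTop)
  obtain ⟨N, hN⟩ := Metric.tendsto_atTop.1
    (hf.tendsto_sub hp (fun n => haE (k n)) (fun n => hbE (k n)) hak hbk) ε hε
  have hlt : dist (f (a (k N))) (f (b (k N))) < ε := by
    rw [dist_comm]
    simpa [Real.dist_eq] using hN N le_rfl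
  exact hlt.not_ge (hfab (k N))
end

section
/- Let p be a positive integer and E an interval of ℝ. If (ξ_n) and (η_n) are sequences of points in E with lim_{n→∞} (ξ_n − η_n) = 0, then there exists a p-quasi-Cauchy sequence (x_n) of points in E with the property that for every positive integer i there exists an index j > p such that x_{j−p} = ξ_i and x_j = η_i. -/
open Filter Topology

/-- The position after `n` steps of a walk through consecutive blocks, where block `i` consists of
the positions `(i, 0), …, (i, L i)`. -/
def blockWalk (L : ℕ → ℕ) : ℕ → ℕ × ℕ
  | 0 => (0, 0)
  | n + 1 =>
    if (blockWalk L n).2 < L (blockWalk L n).1 then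
      ((blockWalk L n).1, (blockWalk L n).2 + 1)
    else ((blockWalk L n).1 + 1, 0)

lemma blockWalk_add {L : ℕ → ℕ} {n i : ℕ} (h : blockWalk L n = (i, 0)) {k : ℕ} (hk : k ≤ L i) :
    blockWalk L (n + k) = (i, k) := by
  induction k with
  | zero => exact h
  | succ k ih =>
    rw [← add_assoc, blockWalk, ih (by omega)]
    exact if_pos (by simpa using hk)

lemma exists_blockWalk_eq (L : ℕ → ℕ) (i : ℕ) : ∃ n, blockWalk L n = (i, 0) := by
  induction i with
  | zero => exact ⟨0, rfl⟩
  | succ i ih =>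
    obtain ⟨n, hn⟩ := ih
    refine ⟨n + L i + 1, ?_⟩
    rw [blockWalk, blockWalk_add hn le_rfl]
    simp

lemma tendsto_blockWalk_fst (L : ℕ → ℕ) :
    Tendsto (fun n => (blockWalk L n).1) atTop atTop := by
  refine tendsto_atTop_atTop_of_monotone (monotone_nat_of_le_succ fun n => ?_) fun i => ?_
  · rw [blockWalk]
    split_ifs <;> simp
  · obtain ⟨n, hn⟩ := exists_blockWalk_eq L i
    exact ⟨n, by simp [hn]⟩

lemma blockWalk_snd_le (L : ℕ → ℕ) (n : ℕ) : (blockWalk L n).2 ≤ L (blockWalk L n).1 := by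
  induction n with
  | zero => simp [blockWalk]
  | succ n ih =>
    rw [blockWalk]
    split_ifs with h
    · exact h
    · simp

/-- The value at a position of the block walk: block `i` starts at `ξ i`, jumps to `η i`, and then
moves towards `ξ (i + 1)` in `L i` equal steps. -/
noncomputable def blockValue (L : ℕ → ℕ) (ξ η : ℕ → ℝ) : ℕ × ℕ → ℝ
  | (i, 0) => ξ i
  | (i, k + 1) => AffineMap.lineMap (η i) (ξ (i + 1)) ((k : ℝ) / L i)

lemma blockValue_mem {L : ℕ → ℕ} {ξ η : ℕ → ℝ} {E : Set ℝ} (hconv : Convex ℝ E)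
    (hξ : ∀ n, ξ n ∈ E) (hη : ∀ n, η n ∈ E) {s : ℕ × ℕ} (hs : s.2 ≤ L s.1) :
    blockValue L ξ η s ∈ E := by
  obtain ⟨i, _ | k⟩ := s
  · exact hξ i
  · refine hconv.lineMap_mem (hη i) (hξ (i + 1)) ⟨by positivity, div_le_one_of_le₀ ?_ (by positivity)⟩
    have : k + 1 ≤ L i := hs
    exact_mod_cast (by omega : k ≤ L i)

lemma abs_blockValue_succ_sub_le {L : ℕ → ℕ} (hL : ∀ i, 0 < L i) (ξ η : ℕ → ℝ) (n : ℕ) :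
    |blockValue L ξ η (blockWalk L (n + 1)) - blockValue L ξ η (blockWalk L n)| ≤
      |ξ (blockWalk L n).1 - η (blockWalk L n).1| +
        |ξ ((blockWalk L n).1 + 1) - η (blockWalk L n).1| / L (blockWalk L n).1 := by
  have hle := blockWalk_snd_le L n
  rw [blockWalk]
  generalize blockWalk L n = s at hle ⊢
  obtain ⟨i, k⟩ := s
  have hpos : (0 : ℝ) < L i := by exact_mod_cast hL i
  have key : ∀ d : ℝ, d = (ξ (i + 1) - η i) / L i →
      |d| ≤ |ξ i - η i| + |ξ (i + 1) - η i| / L i := by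
    rintro d rfl
    rw [abs_div, abs_of_pos hpos]
    exact le_add_of_nonneg_left (abs_nonneg _)
  dsimp only at hle ⊢
  obtain _ | k := k
  · rw [if_pos (hL i)]
    simp only [blockValue, Nat.cast_zero, zero_div, AffineMap.lineMap_apply_zero]
    rw [abs_sub_comm]
    exact le_add_of_nonneg_right (by positivity)
  · split_ifs with h
    · apply key
      simp only [blockValue, AffineMap.lineMap_apply_ring']
      push_cast
      ring
    · apply key
      have hk : (k : ℝ) = L i - 1 := by
        rw [← (by omega : k + 1 = L i)]
        simp
      simp only [blockValue, AffineMap.lineMap_apply_ring', hk]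
      field_simp
      ring

lemma exists_quasiCauchy_through_pairs {E : Set ℝ} (hconv : Convex ℝ E)
    {ξ η : ℕ → ℝ} (hξ : ∀ n, ξ n ∈ E) (hη : ∀ n, η n ∈ E)
    (hlim : Tendsto (fun n => ξ n - η n) atTop (𝓝 0)) :
    ∃ y : ℕ → ℝ, (∀ n, y n ∈ E) ∧ Tendsto (fun n => y (n + 1) - y n) atTop (𝓝 0) ∧
      ∀ i, ∃ k, y k = ξ i ∧ y (k + 1) = η i := by
  have hex (i : ℕ) : ∃ m : ℕ, 0 < m ∧ |ξ (i + 1) - η i| / m ≤ 1 / ((i : ℝ) + 1) := by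
    obtain ⟨m, hm⟩ := exists_nat_gt (|ξ (i + 1) - η i| * (i + 1))
    have hm0 : (0 : ℝ) < m := lt_of_le_of_lt (by positivity) hm
    refine ⟨m, by exact_mod_cast hm0, ?_⟩
    rw [div_le_div_iff₀ hm0 (by positivity), one_mul]
    exact hm.le
  choose L hL hstep using hex
  refine ⟨fun n => blockValue L ξ η (blockWalk L n),
    fun n => blockValue_mem hconv hξ hη (blockWalk_snd_le L n), ?_, fun i => ?_⟩
  · have hbound : Tendsto (fun i : ℕ => |ξ i - η i| + 1 / ((i : ℝ) + 1)) atTop (𝓝 0) := by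
      simpa using hlim.abs.add tendsto_one_div_add_atTop_nhds_zero_nat
    refine squeeze_zero_norm (fun n => ?_) (hbound.comp (tendsto_blockWalk_fst L))
    exact (abs_blockValue_succ_sub_le hL ξ η n).trans (by simpa using hstep _)
  · obtain ⟨k, hk⟩ := exists_blockWalk_eq L i
    refine ⟨k, by simp [hk, blockValue], ?_⟩
    simp [blockWalk_add hk (hL i), blockValue]

/-- Let `p` be a positive integer and `E` an interval (nonempty convex
subset) of `ℝ`. If `ξ` and `η` are sequences of points in `E` with `ξ n - η n → 0`,
then there exists a `p`-quasi-Cauchy sequence `x` of points in `E` such that for every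
index `i` there exists an index `j > p` with `x (j - p) = ξ i` and `x j = η i`. -/
theorem exists_pQuasiCauchy_through_pairs
    (p : ℕ) (hp : 0 < p) (E : Set ℝ) (hne : E.Nonempty) (hconv : Convex ℝ E)
    (ξ η : ℕ → ℝ) (hξ : ∀ n, ξ n ∈ E) (hη : ∀ n, η n ∈ E)
    (hlim : Tendsto (fun n => ξ n - η n) atTop (𝓝 0)) :
    ∃ x : ℕ → ℝ, (∀ n, x n ∈ E) ∧ PQuasiCauchy p x ∧
      ∀ i : ℕ, ∃ j : ℕ, p < j ∧ x (j - p) = ξ i ∧ x j = η i := by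
  obtain ⟨y, hyE, hy, hpairs⟩ := exists_quasiCauchy_through_pairs hconv hξ hη hlim
  refine ⟨fun n => y (n / p - 1), fun n => hyE _, ?_, fun i => ?_⟩
  · have hdiv : Tendsto (fun n : ℕ => n / p - 1) atTop atTop :=
      (tendsto_sub_atTop_nat 1).comp (Nat.tendsto_div_const_atTop hp.ne')
    refine (hy.comp hdiv).congr' ?_
    filter_upwards [eventually_ge_atTop p] with n hn
    have h1 : 1 ≤ n / p := (Nat.one_le_div_iff hp).2 hn
    simp [Nat.add_div_right n hp, Nat.sub_add_cancel h1]
  · obtain ⟨k, hξk, hηk⟩ := hpairs i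
    refine ⟨(k + 1) * p + p, by nlinarith, ?_, ?_⟩
    · simp [Nat.mul_div_cancel _ hp, hξk]
    · simp [Nat.add_div_right _ hp, Nat.mul_div_cancel _ hp, hηk]
end

section
/- Let p be a positive integer and E an interval of ℝ. If a function f : E → ℝ is p-quasi-Cauchy continuous on E, then f is uniformly continuous on E. -/
open Filter Topology

/-- Continuity in the sense of `p`-quasi-Cauchy sequences implies continuity in the sense of
`1`-quasi-Cauchy sequences: repeat every term of a sequence `p` times. -/
theorem PQuasiCauchyContinuousOn.one {p : ℕ} (hp : 0 < p) {f : ℝ → ℝ} {E : Set ℝ}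
    (hf : PQuasiCauchyContinuousOn p f E) : PQuasiCauchyContinuousOn 1 f E := by
  intro y hyE hy
  have hdiv : Tendsto (fun n : ℕ => n / p) atTop atTop := Nat.tendsto_div_const_atTop hp.ne'
  have hmul : Tendsto (fun n : ℕ => n * p) atTop atTop := tendsto_id.atTop_mul_const' hp
  have hrep : PQuasiCauchy p (fun n => y (n / p)) := by
    refine (hy.comp hdiv).congr fun n => ?_
    simp [Nat.add_div_right n hp]
  refine ((hf _ (fun n => hyE _) hrep).comp hmul).congr fun n => ?_
  simp [Nat.add_div_right _ hp, Nat.mul_div_cancel _ hp]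

/-- A strictly increasing sequence of naturals starting at `0` cuts `ℕ` into consecutive blocks. -/
theorem StrictMono.exists_le_lt_succ {t : ℕ → ℕ} (ht : StrictMono t) (h0 : t 0 = 0) (n : ℕ) :
    ∃ k, t k ≤ n ∧ n < t (k + 1) := by
  induction n with
  | zero => exact ⟨0, h0.le, by have := ht (Nat.lt_add_one 0); omega⟩
  | succ n ih =>
    obtain ⟨k, hk, hk'⟩ := ih
    rcases Nat.lt_or_ge (n + 1) (t (k + 1)) with h | h
    · exact ⟨k, by omega, h⟩
    · exact ⟨k + 1, h, by have := ht (Nat.lt_add_one (k + 1)); omega⟩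

/-- Every sequence in a convex set of reals can be interpolated to a quasi-Cauchy sequence in
which no points are inserted between terms that are already close. -/
theorem Convex.exists_pQuasiCauchy_interpolation {E : Set ℝ} (hE : Convex ℝ E) {c : ℕ → ℝ}
    (hc : ∀ k, c k ∈ E) :
    ∃ (x : ℕ → ℝ) (t : ℕ → ℕ), (∀ n, x n ∈ E) ∧ PQuasiCauchy 1 x ∧ StrictMono t ∧
      (∀ k, x (t k) = c k) ∧
      ∀ k : ℕ, |c (k + 1) - c k| * (k + 1) ≤ 1 → t (k + 1) = t k + 1 := by
  let N : ℕ → ℕ := fun k => max 1 ⌈|c (k + 1) - c k| * (k + 1)⌉₊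
  have hN : ∀ k, 0 < N k := fun k => by simp [N]
  have hNR : ∀ k, (0 : ℝ) < N k := fun k => by exact_mod_cast hN k
  let t : ℕ → ℕ := fun k => ∑ i ∈ Finset.range k, N i
  have ht_succ : ∀ k, t (k + 1) = t k + N k := fun k => Finset.sum_range_succ _ _
  have ht : StrictMono t := strictMono_nat_of_lt_succ fun k => by
    have := ht_succ k; have := hN k; omega
  choose K hK hK' using ht.exists_le_lt_succ (by simp [t])
  have K_eq : ∀ {n k}, t k ≤ n → n < t (k + 1) → K n = k := by
    intro n k h h'
    have h₁ := ht.lt_iff_lt.1 ((hK n).trans_lt h')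
    have h₂ := ht.lt_iff_lt.1 (h.trans_lt (hK' n))
    omega
  have hKtop : Tendsto K atTop atTop := by
    refine tendsto_atTop.2 fun b => ?_
    filter_upwards [eventually_ge_atTop (t b)] with n hn
    have := ht.lt_iff_lt.1 (hn.trans_lt (hK' n))
    omega
  let x : ℕ → ℝ := fun n =>
    c (K n) + (((n : ℝ) - t (K n)) / N (K n)) * (c (K n + 1) - c (K n))
  have hxt : ∀ k, x (t k) = c k := fun k => by
    have : K (t k) = k := K_eq le_rfl (ht (Nat.lt_succ_self k))
    simp [x, this]
  have hstep : ∀ n, x (n + 1) - x n = (c (K n + 1) - c (K n)) / N (K n) := by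
    intro n
    have hne := (hNR (K n)).ne'
    rcases Nat.lt_or_ge (n + 1) (t (K n + 1)) with h | h
    · have : K (n + 1) = K n := K_eq ((hK n).trans n.le_succ) h
      simp only [x, this]
      push_cast
      field_simp
      ring
    · have hn : n + 1 = t (K n + 1) := le_antisymm (hK' n) h
      have hn' : (n : ℝ) + 1 = t (K n) + N (K n) := by
        rw [ht_succ] at hn
        exact_mod_cast hn
      rw [hn, hxt]
      simp only [x]
      rw [show (n : ℝ) - t (K n) = N (K n) - 1 by linarith]
      field_simp
      ring
  refine ⟨x, t, fun n => ?_, ?_, ht, hxt, fun k hk => ?_⟩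
  · refine hE.add_smul_sub_mem (hc _) (hc _) ⟨?_, ?_⟩
    · have : (t (K n) : ℝ) ≤ n := by exact_mod_cast hK n
      exact div_nonneg (by linarith) (hNR _).le
    · have : (n : ℝ) ≤ t (K n) + N (K n) := by
        have := (hK' n).le
        rw [ht_succ] at this
        exact_mod_cast this
      rw [div_le_one (hNR _)]
      linarith
  · have hlim : Tendsto (fun n => 1 / ((K n : ℝ) + 1)) atTop (𝓝 0) :=
      tendsto_one_div_add_atTop_nhds_zero_nat.comp hKtop
    refine squeeze_zero_norm (fun n => ?_) hlim
    have hle : |c (K n + 1) - c (K n)| * (K n + 1) ≤ N (K n) :=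
      (Nat.le_ceil _).trans (Nat.cast_le.2 (le_max_right _ _))
    rw [hstep, Real.norm_eq_abs, abs_div, abs_of_pos (hNR (K n)),
      div_le_div_iff₀ (hNR _) (by positivity)]
    linarith
  · rw [ht_succ, Nat.add_left_cancel_iff]
    exact max_eq_left (Nat.ceil_le.2 (by simpa using hk))

/-- If `f` is `p`-quasi-Cauchy continuous on an interval (nonempty
convex subset) `E` of `ℝ` for a positive integer `p`, then `f` is uniformly
continuous on `E`. -/
theorem pQuasiCauchyContinuous_on_interval_uniformContinuous
    (p : ℕ) (hp : 0 < p) (E : Set ℝ) (hne : E.Nonempty) (hconv : Convex ℝ E)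
    (f : ℝ → ℝ) (hf : PQuasiCauchyContinuousOn p f E) :
    UniformContinuousOn f E := by
  by_contra hnot
  simp only [Metric.uniformContinuousOn_iff, not_forall, not_exists, not_and, not_lt] at hnot
  obtain ⟨ε, hε, hnot⟩ := hnot
  have hpairs : ∀ k : ℕ, ∃ a ∈ E, ∃ b ∈ E, |b - a| * (2 * k + 1) ≤ 1 ∧ ε ≤ |f b - f a| := by
    intro k
    have hpos : (0 : ℝ) < 2 * k + 1 := by positivity
    by_contra! hall
    obtain ⟨b, hb, a, ha, hab, hfab⟩ := hnot (1 / (2 * k + 1)) (by positivity)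
    rw [Real.dist_eq, lt_div_iff₀ hpos] at hab
    exact (hall a ha b hb hab.le).not_ge hfab
  choose a ha b hb hab hfab using hpairs
  let c : ℕ → ℝ := fun n => if Even n then a (n / 2) else b (n / 2)
  have hc_even : ∀ k, c (2 * k) = a k := fun k => by simp [c]
  have hc_odd : ∀ k, c (2 * k + 1) = b k := fun k => by
    simp [c, show (2 * k + 1) / 2 = k by omega]
  have hc : ∀ n, c n ∈ E := fun n => by
    simp only [c]
    split_ifs
    exacts [ha _, hb _]
  obtain ⟨x, t, hxE, hx, ht, hxt, hclose⟩ := hconv.exists_pQuasiCauchy_interpolation hc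
  have htop : Tendsto (fun k => t (2 * k)) atTop atTop :=
    ht.tendsto_atTop.comp (tendsto_id.const_mul_atTop' two_pos)
  have hlim := (hf.one hp x hxE hx).comp htop
  obtain ⟨k, hk⟩ := (Metric.tendsto_nhds.1 hlim ε hε).exists
  have hadj : t (2 * k + 1) = t (2 * k) + 1 :=
    hclose (2 * k) (by rw [hc_even, hc_odd]; push_cast; exact hab k)
  simp only [Function.comp_apply, ← hadj, hxt, hc_even, hc_odd, Real.dist_eq, sub_zero] at hk
  exact (hfab k).not_gt hk
end

section
/- Let p be a positive integer and E an interval of ℝ. If a function f : E → ℝ is δ-quasi-Cauchy continuous on E (i.e., f maps δ-quasi-Cauchy sequences of points in E to δ-quasi-Cauchy sequences), then f is p-quasi-Cauchy continuous on E. -/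
open Filter Topology

/-- A real sequence `x` is `δ`-quasi-Cauchy if `x (n + 2) - 2 x (n + 1) + x n → 0`. -/
def DeltaQuasiCauchy (x : ℕ → ℝ) : Prop :=
  Tendsto (fun n => x (n + 2) - 2 * x (n + 1) + x n) atTop (𝓝 0)

/-- A function `f` is `δ`-quasi-Cauchy continuous on `E` if it maps `δ`-quasi-Cauchy
sequences of points in `E` to `δ`-quasi-Cauchy sequences. -/
def DeltaQuasiCauchyContinuousOn (f : ℝ → ℝ) (E : Set ℝ) : Prop :=
  ∀ x : ℕ → ℝ, (∀ n, x n ∈ E) → DeltaQuasiCauchy x →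
    DeltaQuasiCauchy (fun n => f (x n))

/-- Doubling every term of a quasi-Cauchy sequence shows that `δ`-quasi-Cauchy continuity implies
`1`-quasi-Cauchy continuity. -/
theorem DeltaQuasiCauchyContinuousOn.pQuasiCauchyContinuousOn_one {f : ℝ → ℝ} {E : Set ℝ}
    (hf : DeltaQuasiCauchyContinuousOn f E) : PQuasiCauchyContinuousOn 1 f E := by
  intro x hxE hx
  have hdiv : Tendsto (fun n : ℕ => n / 2) atTop atTop :=
    tendsto_atTop.2 fun b => (eventually_ge_atTop (2 * b)).mono fun n hn => by omega
  have hδ : DeltaQuasiCauchy fun n => x (n / 2) := by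
    refine squeeze_zero_norm (fun n => ?_) (by simpa using (hx.comp hdiv).norm)
    rcases Nat.even_or_odd' n with ⟨m, rfl | rfl⟩
    · simp only [Real.norm_eq_abs, show (2 * m + 2) / 2 = m + 1 by omega,
        show (2 * m + 1) / 2 = m by omega, show 2 * m / 2 = m by omega]
      exact le_of_eq (congrArg abs (by ring))
    · simp only [Real.norm_eq_abs, show (2 * m + 1 + 2) / 2 = m + 1 by omega,
        show (2 * m + 1 + 1) / 2 = m + 1 by omega, show (2 * m + 1) / 2 = m by omega]
      rw [← abs_neg]
      exact le_of_eq (congrArg abs (by ring))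
  have hmul : Tendsto (fun n : ℕ => 2 * n) atTop atTop :=
    tendsto_id.const_mul_atTop' two_pos
  refine ((hf _ (fun n => hxE _) hδ).comp hmul).congr fun n => ?_
  simp only [Function.comp_apply, show (2 * n + 2) / 2 = n + 1 by omega,
    show (2 * n + 1) / 2 = n by omega, show 2 * n / 2 = n by omega]
  ring

/-- One step of a walk visiting the points `y 0, y 1, …` in turn: from the state `(n, c)`, move `c`
towards the target `y n` by at most `1 / (n + 1)`, and pass to the next target on arrival. -/
noncomputable def walkStep (y : ℕ → ℝ) (s : ℕ × ℝ) : ℕ × ℝ :=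
  if |y s.1 - s.2| ≤ 1 / ((s.1 : ℝ) + 1) then (s.1 + 1, y s.1)
  else (s.1, max (s.2 - 1 / ((s.1 : ℝ) + 1)) (min (s.2 + 1 / ((s.1 : ℝ) + 1)) (y s.1)))

/-- The walk started at `y 0` obtained by iterating `walkStep`. -/
noncomputable def walk (y : ℕ → ℝ) : ℕ → ℕ × ℝ
  | 0 => (0, y 0)
  | k + 1 => walkStep y (walk y k)

theorem abs_walkStep_sub_le (y : ℕ → ℝ) (s : ℕ × ℝ) :
    |(walkStep y s).2 - s.2| ≤ 1 / ((s.1 : ℝ) + 1) := by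
  have hr : 0 < 1 / ((s.1 : ℝ) + 1) := by positivity
  unfold walkStep
  split_ifs with h
  · exact h
  · grind

theorem walkStep_mem {y : ℕ → ℝ} {E : Set ℝ} (hE : E.OrdConnected) (hy : ∀ n, y n ∈ E)
    {s : ℕ × ℝ} (hs : s.2 ∈ E) : (walkStep y s).2 ∈ E := by
  have hr : 0 < 1 / ((s.1 : ℝ) + 1) := by positivity
  unfold walkStep
  split_ifs with h
  · exact hy _
  · refine hE.uIcc_subset hs (hy s.1) ?_
    rw [Set.mem_uIcc]
    grind

theorem walk_mem {y : ℕ → ℝ} {E : Set ℝ} (hE : E.OrdConnected) (hy : ∀ n, y n ∈ E) (k : ℕ) :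
    (walk y k).2 ∈ E := by
  induction k with
  | zero => exact hy 0
  | succ k ih => exact walkStep_mem hE hy ih

theorem monotone_walk_fst (y : ℕ → ℝ) : Monotone fun k => (walk y k).1 := by
  refine monotone_nat_of_le_succ fun k => ?_
  simp only [walk, walkStep]
  split_ifs <;> simp

theorem exists_walk_eq_succ_of_abs_le (y : ℕ → ℝ) (m k : ℕ)
    (h : |y (walk y k).1 - (walk y k).2| ≤ m * (1 / (((walk y k).1 : ℝ) + 1))) :
    ∃ j, walk y j = ((walk y k).1 + 1, y (walk y k).1) := by
  induction m generalizing k with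
  | zero =>
    refine ⟨k + 1, ?_⟩
    rw [walk, walkStep, if_pos]
    have hr : 0 < 1 / (((walk y k).1 : ℝ) + 1) := by positivity
    simp only [Nat.cast_zero, zero_mul] at h
    linarith
  | succ m ih =>
    by_cases hc : |y (walk y k).1 - (walk y k).2| ≤ 1 / (((walk y k).1 : ℝ) + 1)
    · exact ⟨k + 1, by rw [walk, walkStep, if_pos hc]⟩
    · have hs : walk y (k + 1) = ((walk y k).1,
          max ((walk y k).2 - 1 / (((walk y k).1 : ℝ) + 1))
            (min ((walk y k).2 + 1 / (((walk y k).1 : ℝ) + 1)) (y (walk y k).1))) := by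
        rw [walk, walkStep, if_neg hc]
      have hr : 0 < 1 / (((walk y k).1 : ℝ) + 1) := by positivity
      have := ih (k + 1)
      rw [hs] at this
      refine this ?_
      push_cast at h
      rw [add_mul, one_mul] at h
      simp only
      generalize (m : ℝ) * (1 / (((walk y k).1 : ℝ) + 1)) = a at *
      generalize 1 / (((walk y k).1 : ℝ) + 1) = r at *
      clear ih this hs
      grind

theorem exists_walk_eq (y : ℕ → ℝ) (n : ℕ) : ∃ k, walk y k = (n + 1, y n) := by
  have key (k : ℕ) : ∃ j, walk y j = ((walk y k).1 + 1, y (walk y k).1) := by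
    have hr : 0 < 1 / (((walk y k).1 : ℝ) + 1) := by positivity
    obtain ⟨m, hm⟩ := exists_nat_ge (|y (walk y k).1 - (walk y k).2| / (1 / ((walk y k).1 + 1)))
    exact exists_walk_eq_succ_of_abs_le y m k ((div_le_iff₀ hr).1 hm)
  induction n with
  | zero => exact key 0
  | succ n ih =>
    obtain ⟨k, hk⟩ := ih
    simpa [hk] using key k

theorem tendsto_walk_fst (y : ℕ → ℝ) : Tendsto (fun k => (walk y k).1) atTop atTop := by
  refine tendsto_atTop_atTop_of_monotone (monotone_walk_fst y) fun n => ?_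
  obtain ⟨k, hk⟩ := exists_walk_eq y n
  exact ⟨k, by simp [hk]⟩

theorem pQuasiCauchy_walk (y : ℕ → ℝ) : PQuasiCauchy 1 fun k => (walk y k).2 :=
  squeeze_zero_norm (fun k => abs_walkStep_sub_le y (walk y k))
    ((tendsto_one_div_add_atTop_nhds_zero_nat (𝕜 := ℝ)).comp (tendsto_walk_fst y))

/-- A function preserving quasi-Cauchy sequences on an interval is uniformly continuous there. -/
theorem PQuasiCauchyContinuousOn.uniformContinuousOn {f : ℝ → ℝ} {E : Set ℝ}
    (hE : E.OrdConnected) (hf : PQuasiCauchyContinuousOn 1 f E) : UniformContinuousOn f E := by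
  rw [Metric.uniformContinuousOn_iff]
  by_contra! ⟨ε, hε, h⟩
  choose u hu v hv huv hfuv using fun n : ℕ => h (1 / ((2 * n + 1 : ℕ) + 1 : ℝ)) (by positivity)
  let y : ℕ → ℝ := fun n => if Even n then u (n / 2) else v (n / 2)
  have hy0 (n : ℕ) : y (2 * n) = u n := by simp [y]
  have hy1 (n : ℕ) : y (2 * n + 1) = v n := by
    simp [y, show (2 * n + 1) / 2 = n by omega]
  have hyE (n : ℕ) : y n ∈ E := by
    simp only [y]
    split_ifs
    exacts [hu _, hv _]
  have hlim := hf _ (walk_mem hE hyE) (pQuasiCauchy_walk y)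
  obtain ⟨N, hN⟩ := Metric.tendsto_atTop.1 hlim ε hε
  obtain ⟨k, hk⟩ := exists_walk_eq y (2 * (walk y N).1)
  have hNk : N ≤ k := by
    by_contra! hlt
    have := monotone_walk_fst y hlt.le
    simp only [hk] at this
    omega
  have hk' : (walk y (k + 1)).2 = v (walk y N).1 := by
    rw [walk, walkStep, hk, if_pos, hy1]
    have := huv (walk y N).1
    rw [dist_comm, Real.dist_eq] at this
    rw [hy0, hy1]
    exact this.le
  have hlt := hN k hNk
  beta_reduce at hlt
  rw [hk', hk, hy0, dist_zero_right, Real.norm_eq_abs, ← Real.dist_eq, dist_comm] at hlt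
  exact (hfuv _).not_gt hlt

/-- A uniformly continuous function preserves `p`-quasi-Cauchy sequences. -/
theorem UniformContinuousOn.pQuasiCauchyContinuousOn {f : ℝ → ℝ} {E : Set ℝ}
    (hf : UniformContinuousOn f E) (p : ℕ) : PQuasiCauchyContinuousOn p f E := by
  intro x hxE hx
  refine Metric.tendsto_atTop.2 fun ε hε => ?_
  obtain ⟨δ, hδ, h⟩ := Metric.uniformContinuousOn_iff.1 hf ε hε
  obtain ⟨N, hN⟩ := Metric.tendsto_atTop.1 hx δ hδ
  refine ⟨N, fun n hn => ?_⟩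
  simpa [Real.dist_eq] using
    h _ (hxE (n + p)) _ (hxE n) (by simpa [Real.dist_eq] using hN n hn)

/-- If `f` is `δ`-quasi-Cauchy continuous on an interval (nonempty
convex subset) `E` of `ℝ`, then `f` is `p`-quasi-Cauchy continuous on `E` for any
positive integer `p`. -/
theorem deltaQuasiCauchyContinuous_implies_pQuasiCauchyContinuous
    (p : ℕ) (hp : 0 < p) (E : Set ℝ) (hne : E.Nonempty) (hconv : Convex ℝ E)
    (f : ℝ → ℝ) (hf : DeltaQuasiCauchyContinuousOn f E) :
    PQuasiCauchyContinuousOn p f E := by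
  exact (hf.pQuasiCauchyContinuousOn_one.uniformContinuousOn
    hconv.ordConnected).pQuasiCauchyContinuousOn p
end

section
/- Let p be a positive integer and E a subset of ℝ. If (f_n) is a sequence of functions from E to ℝ, each p-quasi-Cauchy continuous on E, and (f_n) converges uniformly on E to a function f : E → ℝ, then f is p-quasi-Cauchy continuous on E. -/
open Filter Topology

/-- If `(fₙ)` is a sequence of `p`-quasi-Cauchy continuous functions on a
subset `E` of `ℝ` converging uniformly on `E` to `f`, then `f` is `p`-quasi-Cauchy
continuous on `E`. -/
theorem uniform_limit_pQuasiCauchyContinuous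
    (p : ℕ) (hp : 0 < p) (E : Set ℝ) (F : ℕ → ℝ → ℝ) (f : ℝ → ℝ)
    (hF : ∀ n, PQuasiCauchyContinuousOn p (F n) E)
    (hconv : TendstoUniformlyOn F f atTop E) :
    PQuasiCauchyContinuousOn p f E := by
  intro x hx hxq
  refine Metric.tendsto_atTop.2 fun ε hε => ?_
  obtain ⟨m, hm⟩ := (Metric.tendstoUniformlyOn_iff.1 hconv (ε / 3) (by positivity)).exists
  obtain ⟨N, hN⟩ := Metric.tendsto_atTop.1 (hF m x hx hxq) (ε / 3) (by positivity)
  refine ⟨N, fun n hn => ?_⟩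
  have hlast := hm _ (hx (n + p))
  have hfirst := hm _ (hx n)
  have hmid := hN n hn
  simp only [Real.dist_eq, sub_zero, abs_lt] at *
  constructor <;> linarith
end

section
/- Let p be a positive integer and E a bounded subset of ℝ. The set of all p-quasi-Cauchy continuous functions from E to ℝ is a closed subset of the space of all bounded continuous real-valued functions on E equipped with the supremum metric. -/
open Filter Topology BoundedContinuousFunction

/-- Let `p` be a positive integer and `E` a bounded subset of `ℝ`.
The set of all `p`-quasi-Cauchy continuous functions from `E` to `ℝ` is a closed
subset of the space of bounded continuous real-valued functions on `E` with the
supremum metric. -/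
theorem pQuasiCauchyContinuous_isClosed_in_boundedContinuousFunctions
    (p : ℕ) (hp : 0 < p) (E : Set ℝ) (hE : Bornology.IsBounded E) :
    IsClosed {g : BoundedContinuousFunction E ℝ |
      ∀ x : ℕ → E, PQuasiCauchy p (fun n => (x n : ℝ)) →
        PQuasiCauchy p (fun n => g (x n))} := by
  refine isClosed_of_closure_subset fun g hg x hx => Metric.tendsto_atTop.2 fun ε hε => ?_
  obtain ⟨h, hh, hgh⟩ := Metric.mem_closure_iff.1 hg (ε / 3) (by positivity)
  obtain ⟨N, hN⟩ := Metric.tendsto_atTop.1 (hh x hx) (ε / 3) (by positivity)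
  refine ⟨N, fun n hn => ?_⟩
  have near : ∀ y, |g y - h y| < ε / 3 := fun y =>
    (BoundedContinuousFunction.dist_coe_le_dist y).trans_lt hgh
  have hn' := hN n hn
  have h₁ := near (x (n + p))
  have h₂ := near (x n)
  rw [Real.dist_eq, sub_zero, abs_lt] at hn' ⊢
  rw [abs_lt] at h₁ h₂
  constructor <;> linarith
end

section
/- Let p be a positive integer. A function f : ℝ → ℝ is sequentially continuous (i.e., maps convergent sequences to convergent sequences) if and only if for every convergent real sequence (x_n), the image sequence (f(x_n)) is p-quasi-Cauchy. -/
open Filter Topology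

/-- If `f` maps convergent sequences to `p`-quasi-Cauchy sequences, then `f (x n) → f a` whenever
`x n → a`: interleave blocks of length `p` of terms of `x` with blocks of the constant `a`. -/
theorem tendsto_apply_of_convergent_to_pQuasiCauchy {p : ℕ} (hp : 0 < p) {f : ℝ → ℝ}
    (hf : ∀ x : ℕ → ℝ, (∃ a : ℝ, Tendsto x atTop (𝓝 a)) → PQuasiCauchy p (fun n => f (x n)))
    {x : ℕ → ℝ} {a : ℝ} (hx : Tendsto x atTop (𝓝 a)) :
    Tendsto (fun n => f (x n)) atTop (𝓝 (f a)) := by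
  have hblock : Tendsto (fun n : ℕ => n / p / 2) atTop atTop :=
    (Nat.tendsto_div_const_atTop two_ne_zero).comp (Nat.tendsto_div_const_atTop hp.ne')
  have hy : Tendsto (fun n : ℕ => if Even (n / p) then x (n / p / 2) else a) atTop (𝓝 a) :=
    (hx.comp hblock).if' tendsto_const_nhds
  have hsub : Tendsto (fun k : ℕ => 2 * k * p) atTop atTop :=
    tendsto_atTop_mono 
      (fun k => by simp only [id]; nlinarith [Nat.mul_le_mul_left k hp]) tendsto_id
  have hdiff : Tendsto (fun k => f a - f (x k)) atTop (𝓝 0) := by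
    refine ((hf _ ⟨a, hy⟩).comp hsub).congr fun k => ?_
    have heven : 2 * k * p / p = 2 * k := Nat.mul_div_cancel _ hp
    have hodd : (2 * k * p + p) / p = 2 * k + 1 := by
      rw [Nat.add_div_right _ hp, heven]
    simp [heven, hodd]
  simpa using (tendsto_const_nhds (x := f a)).sub hdiff

/-- For a positive integer `p`, a function `f : ℝ → ℝ` maps convergent
sequences to convergent sequences iff it maps every convergent sequence to a
`p`-quasi-Cauchy sequence. -/
theorem sequentiallyContinuous_iff_convergent_to_pQuasiCauchy
    (p : ℕ) (hp : 0 < p) (f : ℝ → ℝ) :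
    (∀ x : ℕ → ℝ, (∃ a : ℝ, Tendsto x atTop (𝓝 a)) →
      ∃ b : ℝ, Tendsto (fun n => f (x n)) atTop (𝓝 b)) ↔
    (∀ x : ℕ → ℝ, (∃ a : ℝ, Tendsto x atTop (𝓝 a)) →
      PQuasiCauchy p (fun n => f (x n))) := by
  refine ⟨fun h x hx => ?_, fun h x ⟨a, ha⟩ =>
    ⟨f a, tendsto_apply_of_convergent_to_pQuasiCauchy hp h ha⟩⟩
  obtain ⟨b, hb⟩ := h x hx
  simpa [PQuasiCauchy] using (hb.comp (tendsto_add_atTop_nat p)).sub hb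
end
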